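/- For every integer n ≥ 2, the integral ∫_{−π/2}^{π/2} cos A · cos^{2n}(A/2) dA is at least (n/(n+1)) · (π + 2)/(2^n a_n). -/

import Mathlib

open Real Filter

/-- Normalizing constant `a_n = 2^n (n!)^2 / (2n)!`. -/
noncomputable def aW (n : ℕ) : ℝ :=
  2 ^ n * (Nat.factorial n : ℝ) ^ 2 / (Nat.factorial (2 * n) : ℝ)

/-- Influence function `I_n(θ) = a_n (1 + cos θ)^n`. -/
noncomputable def influence (n : ℕ) (θ : ℝ) : ℝ := aW n * (1 + Real.cos θ) ^ n

/-- Sensitivity function `S(θ) = -sin θ`. -/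
noncomputable def sens (θ : ℝ) : ℝ := -Real.sin θ

/-!
Put `Jₙ = ∫ x in -(π / 4)..π / 4, cos x ^ (2 * n)`. Substituting `A = 2x` and integrating by parts
turns the integral of `cos A * cos (A / 2) ^ (2 * n)` into `(2 n Jₙ + 2 / 2 ^ n) / (n + 1)`. The
factor `2 ^ (n + 1) * aW n` makes the reduction formula for `Jₙ` telescope, so that
`2 ^ (n + 1) * aW n * Jₙ = π + 2 * ∑ aW k / k` over `1 ≤ k ≤ n`. The bound keeps only the term
`k = 1` of this sum of positive terms.
-/

open intervalIntegral

theorem aW_pos (n : ℕ) : 0 < aW n := by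
  unfold aW
  positivity

theorem aW_zero : aW 0 = 1 := by
  simp [aW]

theorem aW_one : aW 1 = 1 := by
  simp [aW]

theorem aW_succ (n : ℕ) : aW (n + 1) = (n + 1) / (2 * n + 1) * aW n := by
  unfold aW
  rw [show 2 * (n + 1) = 2 * n + 1 + 1 by ring]
  simp only [Nat.factorial_succ]
  push_cast
  field_simp
  ring

theorem integral_cos_mul_cos_half_pow (a b : ℝ) (n : ℕ) :
    ∫ A in a..b, cos A * cos (A / 2) ^ n =
      4 * (∫ x in a / 2..b / 2, cos x ^ (n + 2)) - 2 * ∫ x in a / 2..b / 2, cos x ^ n := by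
  have double_angle (A : ℝ) :
      cos A * cos (A / 2) ^ n = 2 * cos (A / 2) ^ (n + 2) - cos (A / 2) ^ n := by
    have h : cos A = 2 * cos (A / 2) ^ 2 - 1 := by rw [← cos_two_mul, mul_div_cancel₀ A two_ne_zero]
    rw [h]
    ring
  simp_rw [double_angle]
  rw [integral_comp_div (fun x ↦ 2 * cos x ^ (n + 2) - cos x ^ n) two_ne_zero,
    integral_sub (Continuous.intervalIntegrable (by fun_prop) _ _)
      (Continuous.intervalIntegrable (by fun_prop) _ _),
    integral_const_mul, smul_eq_mul]
  ring

theorem cos_pi_div_four_pow_mul_sin_pi_div_four (n : ℕ) :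
    cos (π / 4) ^ (2 * n + 1) * sin (π / 4) = (1 / 2) ^ (n + 1) := by
  have cos_sq_pi_div_four : cos (π / 4) ^ 2 = 1 / 2 := by
    rw [cos_pi_div_four, div_pow, sq_sqrt zero_le_two]
    norm_num
  rw [sin_pi_div_four, ← cos_pi_div_four, ← pow_succ, ← cos_sq_pi_div_four, ← pow_mul]
  ring_nf

theorem integral_cos_pow_even_succ_pi_div_four (n : ℕ) :
    ∫ x in -(π / 4)..π / 4, cos x ^ (2 * n + 2) =
      ((1 / 2) ^ (n + 1) + (2 * n + 1) / 2 * ∫ x in -(π / 4)..π / 4, cos x ^ (2 * n)) /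
        (n + 1) := by
  rw [integral_cos_pow, cos_neg, sin_neg, mul_neg, cos_pi_div_four_pow_mul_sin_pi_div_four]
  push_cast
  field_simp
  ring

theorem two_pow_mul_aW_mul_integral_cos_pow_even (n : ℕ) :
    2 ^ (n + 1) * aW n * ∫ x in -(π / 4)..π / 4, cos x ^ (2 * n) =
      π + 2 * ∑ k ∈ Finset.range n, aW (k + 1) / (k + 1) := by
  induction n with
  | zero =>
    simp only [aW_zero, mul_zero, pow_zero, integral_const, Finset.range_zero, Finset.sum_empty,
      smul_eq_mul]
    ring
  | succ n ih =>
    rw [mul_add_one 2 n, Finset.sum_range_succ, mul_add, ← add_assoc, ← ih,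
      integral_cos_pow_even_succ_pi_div_four, aW_succ, one_div, inv_pow]
    field_simp
    ring

theorem pi_add_two_le_two_pow_mul_aW_mul_integral_cos_pow_even {n : ℕ} (hn : n ≠ 0) :
    π + 2 ≤ 2 ^ (n + 1) * aW n * ∫ x in -(π / 4)..π / 4, cos x ^ (2 * n) := by
  have first_term_le_sum : 1 ≤ ∑ k ∈ Finset.range n, aW (k + 1) / (k + 1) := by
    have h := Finset.single_le_sum (f := fun k : ℕ ↦ aW (k + 1) / (k + 1))
      (fun k _ ↦ div_nonneg (aW_pos (k + 1)).le k.cast_add_one_pos.le)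
      (Finset.mem_range.mpr hn.pos)
    simpa [aW_one] using h
  rw [two_pow_mul_aW_mul_integral_cos_pow_even]
  linarith

theorem integral_cos_mul_cos_half_pow_even (n : ℕ) :
    ∫ A in -(π / 2)..π / 2, cos A * cos (A / 2) ^ (2 * n) =
      n / (n + 1) * (2 * ∫ x in -(π / 4)..π / 4, cos x ^ (2 * n)) + 2 / ((n + 1) * 2 ^ n) := by
  rw [integral_cos_mul_cos_half_pow, neg_div, show π / 2 / 2 = π / 4 by ring,
    integral_cos_pow_even_succ_pi_div_four, one_div, inv_pow]
  field_simp
  ring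

-- Equality holds for `n = 0` and `n = 1`.
theorem stmt16_general (n : ℕ) :
    (n : ℝ) / (n + 1) * (π + 2) / (2 ^ n * aW n) + 2 / ((n + 1) * 2 ^ n) ≤
      ∫ A in -(π / 2)..π / 2, cos A * cos (A / 2) ^ (2 * n) := by
  rw [integral_cos_mul_cos_half_pow_even, mul_div_assoc]
  rcases eq_or_ne n 0 with rfl | hn
  · simp
  have lower_bound : (π + 2) / (2 ^ n * aW n) ≤ 2 * ∫ x in -(π / 4)..π / 4, cos x ^ (2 * n) := by
    rw [div_le_iff₀ (mul_pos (by positivity) (aW_pos n))]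
    exact (pi_add_two_le_two_pow_mul_aW_mul_integral_cos_pow_even hn).trans_eq (by ring)
  gcongr

/-- `∫_{−π/2}^{π/2} cos A · cos^{2n}(A/2) dA ≥ (n/(n+1)) (π+2)/(2^n a_n)` for `n ≥ 2`. -/
theorem stmt16 (n : ℕ) (hn : 2 ≤ n) :
    ((n : ℝ) / ((n : ℝ) + 1)) * (Real.pi + 2) / (2 ^ n * aW n) ≤
      ∫ A in (-(Real.pi / 2))..(Real.pi / 2),
        Real.cos A * Real.cos (A / 2) ^ (2 * n) := by
  exact (le_add_of_nonneg_right (by positivity)).trans (stmt16_general n)
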